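/- arXiv:1408.2572 — 2 statements merged into one kernel-verified Lean document; each statement's English description precedes it below -/
import Mathlib

section
/- For every real number P > 0, the inequality log(1 + P) > 2 · log(1 + P/(P + 1)) holds if and only if P > (1 + √5)/2, the golden ratio. -/
open scoped goldenRatio

theorem one_add_sub_one_add_div_sq {K : Type*} [Field K] {x : K} (hx : x + 1 ≠ 0) :
    1 + x - (1 + x / (x + 1)) ^ 2 = x / (x + 1) ^ 2 * (x ^ 2 - (x + 1)) := by
  field_simp
  ring

theorem one_add_div_sq_lt_one_add_iff {K : Type*} [Field K] [LinearOrder K]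
    [IsStrictOrderedRing K] {x : K} (hx : 0 < x) :
    (1 + x / (x + 1)) ^ 2 < 1 + x ↔ x + 1 < x ^ 2 := by
  have hx_add_one : x + 1 ≠ 0 := by positivity
  have hcoeff : 0 < x / (x + 1) ^ 2 := by positivity
  rw [← sub_pos, one_add_sub_one_add_div_sq hx_add_one, mul_pos_iff_of_pos_left hcoeff, sub_pos]

theorem sq_sub_add_one_eq_sub_goldenRatio_mul_sub_goldenConj (x : ℝ) :
    x ^ 2 - (x + 1) = (x - φ) * (x - ψ) := by
  linear_combination x * Real.goldenRatio_add_goldenConj - Real.goldenRatio_mul_goldenConj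

theorem add_one_lt_sq_iff_goldenRatio_lt {x : ℝ} (hx : ψ < x) : x + 1 < x ^ 2 ↔ φ < x := by
  rw [← sub_pos, sq_sub_add_one_eq_sub_goldenRatio_mul_sub_goldenConj,
    mul_pos_iff_of_pos_right (sub_pos.mpr hx), sub_pos]

/-- For `P > 0`, the two-operator Shannon interference-limited condition holds
iff `P` exceeds the golden ratio. -/
theorem shannon_two_ops_iff_golden_ratio (P : ℝ) (hP : 0 < P) :
    Real.log (1 + P) > 2 * Real.log (1 + P / (P + 1)) ↔
      P > (1 + Real.sqrt 5) / 2 := by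
  have hsingle : 0 < 1 + P := by positivity
  have hshared : 0 < 1 + P / (P + 1) := by positivity
  calc
    2 * Real.log (1 + P / (P + 1)) < Real.log (1 + P)
      ↔ (1 + P / (P + 1)) ^ 2 < 1 + P :=
        mod_cast (Real.pow_lt_iff_lt_log (n := 2) hshared hsingle).symm
    _ ↔ P + 1 < P ^ 2 := one_add_div_sq_lt_one_add_iff hP
    _ ↔ φ < P := add_one_lt_sq_iff_goldenRatio_lt (Real.goldenConj_neg.trans hP)
end

section
/- Let S ⊆ ℝ be a measurable set with Lebesgue measure W > 0, n ≥ 2 a natural number, P > 0 a real, r : ℝ → ℝ continuous and strictly increasing with r(P) > 0, and π : ℝ → ℝ → ℝ strictly increasing in its first argument. Then for every measurable interference profile I : ℝ → ℝ with 0 ≤ I(f) ≤ (n−1)·P for all f ∈ S and every traffic intensity λ: π((1/r(P)) · ∫_S r(P/(1 + I(f))) df, λ) ≥ π((W/r(P)) · r(P/((n−1)·P + 1)), λ), with equality if and only if I(f) = (n−1)·P for almost every f ∈ S. In other words, when an operator best-responds with full power over S, the other n−1 operators minimize its utility exactly by all transmitting at full power, so π_f(λ) = π((W/r(P)) · r(P/((n−1)·P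 + 1)), λ) is the operator's minimax utility. -/
open MeasureTheory

/-!
The effective exclusive bandwidth is the integral over the band of a strictly decreasing function
of the interference. Raising the interference from `I` to its cap `J` therefore lowers the
integrand pointwise, and the two integrals agree only if the integrands, hence the profiles,
agree almost everywhere.
-/

section Measurability

variable {α β γ : Type*} [MeasurableSpace α] {μ : Measure α}
  [TopologicalSpace β] [MeasurableSpace β] [BorelSpace β] [LinearOrder β]
  [OrderClosedTopology β]
  [TopologicalSpace γ] [MeasurableSpace γ] [BorelSpace γ] [LinearOrder γ] [OrderTopology γ]
  [SecondCountableTopology γ]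

theorem aemeasurable_comp_of_monotoneOn {r : β → γ} {g : α → β} {s : Set β}
    (hs : MeasurableSet s) (hr : MonotoneOn r s) (hg : AEMeasurable g μ)
    (hgs : ∀ᵐ x ∂μ, g x ∈ s) : AEMeasurable (fun x => r (g x)) μ := by
  have hmap : (μ.map g).restrict s = μ.map g :=
    Measure.restrict_eq_self_of_ae_mem ((ae_map_iff hg hs).2 hgs)
  have hrg : AEMeasurable r (μ.map g) := hmap ▸ aemeasurable_restrict_of_monotoneOn hs hr
  exact hrg.comp_aemeasurable hg

end Measurability

/-- The signal-to-interference-plus-noise ratio of a transmission at power spectral density `P`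
against interference `x`, both normalized by the noise. -/
noncomputable def sinr (P x : ℝ) : ℝ :=
  P / (1 + x)

/-- The effective exclusive bandwidth of an operator transmitting at power spectral density `P`
against the interference profile `I`, where `r` is the usefulness per unit of bandwidth. The band
is encoded by the measure `μ`: a set `S` of frequencies corresponds to `volume.restrict S`. -/
noncomputable def effectiveBandwidth {α : Type*} [MeasurableSpace α] (μ : Measure α)
    (r : ℝ → ℝ) (P : ℝ) (I : α → ℝ) : ℝ :=
  (1 / r P) * ∫ f, r (sinr P (I f)) ∂μ

theorem sinr_mem_Icc {P x : ℝ} (hP : 0 ≤ P) (hx : 0 ≤ x) : sinr P x ∈ Set.Icc 0 P :=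
  ⟨div_nonneg hP (by linarith), div_le_self hP (by linarith)⟩

theorem antitoneOn_sinr {P : ℝ} (hP : 0 ≤ P) : AntitoneOn (sinr P) (Set.Ici 0) := by
  intro x (hx : 0 ≤ x) y _ hxy
  exact div_le_div_of_nonneg_left hP (by linarith) (by linarith)

theorem sinr_injective {P : ℝ} (hP : P ≠ 0) : Function.Injective (sinr P) := by
  intro x y hxy
  -- The convention `0⁻¹ = 0` keeps inversion injective across the pole `x = -1`.
  simp only [sinr, div_eq_mul_inv] at hxy
  exact add_left_cancel (inv_injective (mul_left_cancel₀ hP hxy))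

section EffectiveBandwidth

variable {α : Type*} [MeasurableSpace α] {μ : Measure α} {r : ℝ → ℝ} {P : ℝ} {I J : α → ℝ}

theorem effectiveBandwidth_const (μ : Measure α) (r : ℝ → ℝ) (P K : ℝ) :
    effectiveBandwidth μ r P (fun _ => K) = (μ.real Set.univ / r P) * r (sinr P K) := by
  rw [effectiveBandwidth, integral_const, smul_eq_mul]
  ring

theorem comp_sinr_ae_le (hr : MonotoneOn r (Set.Icc 0 P)) (hP : 0 ≤ P)
    (hI : 0 ≤ᵐ[μ] I) (hIJ : I ≤ᵐ[μ] J) :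
    (fun f => r (sinr P (J f))) ≤ᵐ[μ] fun f => r (sinr P (I f)) := by
  filter_upwards [hI, hIJ] with f hIf hIJf
  exact hr (sinr_mem_Icc hP (hIf.trans hIJf)) (sinr_mem_Icc hP hIf)
    (antitoneOn_sinr hP hIf (hIf.trans hIJf) hIJf)

theorem comp_sinr_ae_eq_iff (hr : Set.InjOn r (Set.Icc 0 P)) (hP : 0 < P)
    (hI : 0 ≤ᵐ[μ] I) (hJ : 0 ≤ᵐ[μ] J) :
    ((fun f => r (sinr P (I f))) =ᵐ[μ] fun f => r (sinr P (J f))) ↔ I =ᵐ[μ] J := by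
  have hinj : Set.InjOn (fun x => r (sinr P x)) (Set.Ici 0) :=
    hr.comp (sinr_injective hP.ne').injOn fun _ hx => sinr_mem_Icc hP.le hx
  refine Filter.eventually_congr ?_
  filter_upwards [hI, hJ] with f hIf hJf
  exact hinj.eq_iff hIf hJf

variable [IsFiniteMeasure μ]

theorem integrable_comp_sinr (hr : MonotoneOn r (Set.Icc 0 P)) (hP : 0 ≤ P)
    (hI : AEMeasurable I μ) (hI0 : 0 ≤ᵐ[μ] I) : Integrable (fun f => r (sinr P (I f))) μ := by
  have hmem : ∀ᵐ f ∂μ, sinr P (I f) ∈ Set.Icc 0 P := hI0.mono fun _ => sinr_mem_Icc hP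
  have hsinr : AEMeasurable (fun f => sinr P (I f)) μ := (hI.const_add 1).const_div P
  exact .of_mem_Icc (r 0) (r P) (aemeasurable_comp_of_monotoneOn measurableSet_Icc hr hsinr hmem)
    (hmem.mono fun _ hf => hr.mapsTo_Icc hf)

theorem effectiveBandwidth_anti (hr : MonotoneOn r (Set.Icc 0 P)) (hP : 0 ≤ P) (hrP : 0 ≤ r P)
    (hI : AEMeasurable I μ) (hJ : AEMeasurable J μ) (hI0 : 0 ≤ᵐ[μ] I) (hIJ : I ≤ᵐ[μ] J) :
    effectiveBandwidth μ r P J ≤ effectiveBandwidth μ r P I :=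
  mul_le_mul_of_nonneg_left
    (integral_mono_ae (integrable_comp_sinr hr hP hJ (hI0.trans hIJ))
      (integrable_comp_sinr hr hP hI hI0) (comp_sinr_ae_le hr hP hI0 hIJ))
    (one_div_nonneg.2 hrP)

theorem effectiveBandwidth_eq_iff (hr : StrictMonoOn r (Set.Icc 0 P)) (hP : 0 < P)
    (hrP : r P ≠ 0) (hI : AEMeasurable I μ) (hJ : AEMeasurable J μ) (hI0 : 0 ≤ᵐ[μ] I)
    (hIJ : I ≤ᵐ[μ] J) :
    effectiveBandwidth μ r P J = effectiveBandwidth μ r P I ↔ I =ᵐ[μ] J := by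
  have hJ0 : 0 ≤ᵐ[μ] J := hI0.trans hIJ
  calc effectiveBandwidth μ r P J = effectiveBandwidth μ r P I
    _ ↔ ∫ f, r (sinr P (J f)) ∂μ = ∫ f, r (sinr P (I f)) ∂μ :=
      mul_right_inj' (one_div_ne_zero hrP)
    _ ↔ (fun f => r (sinr P (J f))) =ᵐ[μ] fun f => r (sinr P (I f)) :=
      integral_eq_iff_of_ae_le (integrable_comp_sinr hr.monotoneOn hP.le hJ hJ0)
        (integrable_comp_sinr hr.monotoneOn hP.le hI hI0)
        (comp_sinr_ae_le hr.monotoneOn hP.le hI0 hIJ)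
    _ ↔ J =ᵐ[μ] I := comp_sinr_ae_eq_iff hr.injOn hP hJ0 hI0
    _ ↔ I =ᵐ[μ] J := Filter.eventuallyEq_comm

theorem full_power_minimax_general {β : Type*} [Preorder β] {u : ℝ → β} (hu : StrictMono u)
    (hr : StrictMonoOn r (Set.Icc 0 P)) (hP : 0 < P) (hrP : 0 < r P)
    (hI : AEMeasurable I μ) (hJ : AEMeasurable J μ) (hI0 : 0 ≤ᵐ[μ] I) (hIJ : I ≤ᵐ[μ] J) :
    u (effectiveBandwidth μ r P J) ≤ u (effectiveBandwidth μ r P I) ∧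
      (u (effectiveBandwidth μ r P J) = u (effectiveBandwidth μ r P I) ↔ I =ᵐ[μ] J) :=
  ⟨hu.monotone (effectiveBandwidth_anti hr.monotoneOn hP.le hrP.le hI hJ hI0 hIJ),
    hu.injective.eq_iff.trans (effectiveBandwidth_eq_iff hr hP hrP.ne' hI hJ hI0 hIJ)⟩

end EffectiveBandwidth

/-- Lemma 2 (minimax): against a full-power best responder, the other `n − 1`
operators minimize its utility exactly by all transmitting at full power, so
`π_f(λ)` is the minimax utility. -/
theorem full_power_minimax
    (S : Set ℝ) (hS : MeasurableSet S) (W : ℝ) (hW : 0 < W)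
    (hSW : volume S = ENNReal.ofReal W)
    (n : ℕ) (hn : 2 ≤ n) (P : ℝ) (hP : 0 < P)
    (r : ℝ → ℝ) (hrc : Continuous r) (hrm : StrictMono r) (hrP : 0 < r P)
    (π : ℝ → ℝ → ℝ) (hπ : ∀ lam : ℝ, StrictMono (fun x => π x lam))
    (I : ℝ → ℝ) (hImeas : Measurable I)
    (hIbd : ∀ f ∈ S, 0 ≤ I f ∧ I f ≤ ((n : ℝ) - 1) * P) (lam : ℝ) :
    π ((W / r P) * r (P / (((n : ℝ) - 1) * P + 1))) lam
        ≤ π ((1 / r P) * ∫ f in S, r (P / (1 + I f))) lam ∧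
      (π ((W / r P) * r (P / (((n : ℝ) - 1) * P + 1))) lam
          = π ((1 / r P) * ∫ f in S, r (P / (1 + I f))) lam ↔
        ∀ᵐ f ∂(volume.restrict S), I f = ((n : ℝ) - 1) * P) := by
  have : IsFiniteMeasure (volume.restrict S) := isFiniteMeasure_restrict.2 (by simp [hSW])
  have hreal : (volume.restrict S).real Set.univ = W := by simp [measureReal_def, hSW, hW.le]
  have h := full_power_minimax_general (μ := volume.restrict S) (hπ lam) (hrm.strictMonoOn _) hP hrP
    hImeas.aemeasurable aemeasurable_const (ae_restrict_of_forall_mem hS fun f hf => (hIbd f hf).1)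
    (ae_restrict_of_forall_mem hS fun f hf => (hIbd f hf).2)
  rw [effectiveBandwidth_const, hreal, sinr, add_comm 1] at h
  exact h
end
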